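/- Let g₁, g₂ ∈ ℍ and set g := ((1+σ)/2) ι(g₁) + ((1−σ)/2) ι(g₂) ∈ ℍ^𝒜. Then, with q := ḡ₁g₂ ∈ ℍ, one has σ ḡ ĝ = ((1+σ)/2) ι(q) − ((1−σ)/2) ι(q̄) = (σ/2)(ι(q) + ι(q̄)) + (1/2)(ι(q) − ι(q̄)); in particular σ ḡ ĝ lies in ℝ⁴ ⊂ ℍ^𝒜 and, under the identification of ℝ⁴ ⊂ ℍ^𝒜 with ℍ given by σq₀ + q₁I + q₂J + q₃K ↦ q₀ + q₁I + q₂J + q₃K, the element σ ḡ ĝ corresponds to the quaternion product ḡ₁g₂. -/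

import Mathlib

/-!
The algebra of Lorentz numbers `𝒜 = {x + σy}` with `σ² = 1` is identified with the
product ring `ℝ × ℝ` via `x + σy ↦ (x + y, x − y)`, under which `σ ↦ (1, −1)`.
`ℍ^𝒜` is the quaternion algebra over this commutative ring.
-/

noncomputable section

/-- The algebra of Lorentz numbers `𝒜`, identified with the product ring `ℝ × ℝ`. -/
abbrev LorentzA : Type := ℝ × ℝ

/-- `ℍ^𝒜`, the quaternions with coefficients in the Lorentz numbers `𝒜`. -/
abbrev HA : Type := Quaternion LorentzA

/-- The Lorentz number `σ`, corresponding to `(1, -1)` in `ℝ × ℝ`. -/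
def σA : LorentzA := (1, -1)

/-- `σ` viewed as an element of `ℍ^𝒜`. -/
def σQ : HA := ((σA : LorentzA) : HA)

/-- The embedding of `ℝ` in `𝒜` (the diagonal of `ℝ × ℝ`). -/
def toA (x : ℝ) : LorentzA := (x, x)

/-- The `𝒜`-valued pairing `H` on `ℍ^𝒜`: `H(ξ, ξ') = a₀a₀' + a₁a₁' + a₂a₂' + a₃a₃'`. -/
def Hform (ξ ξ' : HA) : LorentzA :=
  ξ.re * ξ'.re + ξ.imI * ξ'.imI + ξ.imJ * ξ'.imJ + ξ.imK * ξ'.imK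

/-- The conjugation `x + σy ↦ x − σy` of `𝒜`, i.e. the swap of the factors of `ℝ × ℝ`. -/
def swapA (a : LorentzA) : LorentzA := (a.2, a.1)

/-- The hat operation on `ℍ^𝒜`, applying the conjugation of `𝒜` to each coefficient. -/
def hatQ (ξ : HA) : HA := ⟨swapA ξ.re, swapA ξ.imI, swapA ξ.imJ, swapA ξ.imK⟩

/-- The imaginary unit `I` of `ℍ^𝒜`. -/
def Iq : HA := ⟨0, 1, 0, 0⟩
/-- The imaginary unit `J` of `ℍ^𝒜`. -/
def Jq : HA := ⟨0, 0, 1, 0⟩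
/-- The imaginary unit `K` of `ℍ^𝒜`. -/
def Kq : HA := ⟨0, 0, 0, 1⟩

/-- The embedding of Euclidean `ℝ⁴` into `ℍ^𝒜`: `(x₀,x₁,x₂,x₃) ↦ σx₀·1 + x₁I + x₂J + x₃K`. -/
def embR4 (x₀ x₁ x₂ x₃ : ℝ) : HA := ⟨(x₀, -x₀), toA x₁, toA x₂, toA x₃⟩

/-- `ℝ⁴` as a subset of `ℍ^𝒜`: `{ξ : hat(conj ξ) = -ξ}`. -/
def R4set : Set HA := {ξ | hatQ (star ξ) = -ξ}

/-- The embedding `ι : ℍ → ℍ^𝒜` induced by the diagonal inclusion `ℝ → ℝ × ℝ ≅ 𝒜`. -/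
def iotaH (q : Quaternion ℝ) : HA := ⟨toA q.re, toA q.imI, toA q.imJ, toA q.imK⟩

/-- Componentwise cosine on `𝒜 ≅ ℝ × ℝ`. -/
def cosA (a : LorentzA) : LorentzA := (Real.cos a.1, Real.cos a.2)
/-- Componentwise sine on `𝒜 ≅ ℝ × ℝ`. -/
def sinA (a : LorentzA) : LorentzA := (Real.sin a.1, Real.sin a.2)

/-- The Lorentz number `θ₁ + σθ₂`, i.e. `(θ₁ + θ₂, θ₁ − θ₂)` in `ℝ × ℝ`. -/
def mkA (θ₁ θ₂ : ℝ) : LorentzA := (θ₁ + θ₂, θ₁ - θ₂)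

/-- The cross product of two imaginary elements of `ℍ^𝒜`: `ξ × ξ' = (ξξ' − ξ'ξ)/2`. -/
def crossP (ξ ξ' : HA) : HA := (1/2 : ℝ) • (ξ * ξ' - ξ' * ξ)

/-- `(1+σ)/2` in `ℍ^𝒜`. -/
def halfPlus : HA := (1/2 : ℝ) • ((1 : HA) + σQ)
/-- `(1−σ)/2` in `ℍ^𝒜`. -/
def halfMinus : HA := (1/2 : ℝ) • ((1 : HA) - σQ)

/-- The element of `ℍ^𝒜` with prescribed real coordinates. -/
def mkHA (a a' b b' c c' d d' : ℝ) : HA := ⟨(a, a'), (b, b'), (c, c'), (d, d')⟩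

section mkLemmas

variable (a a' b b' c c' d d' e e' f f' g g' h h' : ℝ)

theorem mkHA_add : mkHA a a' b b' c c' d d' + mkHA e e' f f' g g' h h' =
    mkHA (a + e) (a' + e') (b + f) (b' + f') (c + g) (c' + g') (d + h) (d' + h') := rfl

theorem mkHA_sub : mkHA a a' b b' c c' d d' - mkHA e e' f f' g g' h h' =
    mkHA (a - e) (a' - e') (b - f) (b' - f') (c - g) (c' - g') (d - h) (d' - h') := rfl

theorem mkHA_neg : -mkHA a a' b b' c c' d d' =
    mkHA (-a) (-a') (-b) (-b') (-c) (-c') (-d) (-d') := rfl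

theorem mkHA_smul (r : ℝ) : r • mkHA a a' b b' c c' d d' =
    mkHA (r * a) (r * a') (r * b) (r * b') (r * c) (r * c') (r * d) (r * d') := rfl

theorem mkHA_star : star (mkHA a a' b b' c c' d d') =
    mkHA a a' (-b) (-b') (-c) (-c') (-d) (-d') := by
  apply Quaternion.ext
  · exact Quaternion.re_star _
  · exact Quaternion.imI_star _
  · exact Quaternion.imJ_star _
  · exact Quaternion.imK_star _

theorem mkHA_mul : mkHA a a' b b' c c' d d' * mkHA e e' f f' g g' h h' =
    mkHA (a * e - b * f - c * g - d * h) (a' * e' - b' * f' - c' * g' - d' * h')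
      (a * f + b * e + c * h - d * g) (a' * f' + b' * e' + c' * h' - d' * g')
      (a * g - b * h + c * e + d * f) (a' * g' - b' * h' + c' * e' + d' * f')
      (a * h + b * g - c * f + d * e) (a' * h' + b' * g' - c' * f' + d' * e') := by
  apply Quaternion.ext
  · exact Quaternion.re_mul _ _
  · exact Quaternion.imI_mul _ _
  · exact Quaternion.imJ_mul _ _
  · exact Quaternion.imK_mul _ _

theorem mkHA_hat : hatQ (mkHA a a' b b' c c' d d') = mkHA a' a b' b c' c d' d := rfl

end mkLemmas

theorem one_mkHA : (1 : HA) = mkHA 1 1 0 0 0 0 0 0 := rfl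

theorem sigma_mkHA : σQ = mkHA 1 (-1) 0 0 0 0 0 0 := rfl

theorem iota_mkHA (q : Quaternion ℝ) :
    iotaH q = mkHA q.re q.re q.imI q.imI q.imJ q.imJ q.imK q.imK := rfl

theorem embR4_mkHA (x y z w : ℝ) : embR4 x y z w = mkHA x (-x) y y z z w w := rfl

theorem halfPlus_mkHA : halfPlus = mkHA 1 0 0 0 0 0 0 0 := by
  simp only [halfPlus, one_mkHA, sigma_mkHA, mkHA_add, mkHA_smul]
  norm_num

theorem halfMinus_mkHA : halfMinus = mkHA 0 1 0 0 0 0 0 0 := by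
  simp only [halfMinus, one_mkHA, sigma_mkHA, mkHA_sub, mkHA_smul]
  norm_num

/-- For `g = ((1+σ)/2)ι(g₁) + ((1−σ)/2)ι(g₂)` and `q = ḡ₁g₂ ∈ ℍ`,
one has `σ ḡ ĝ = ((1+σ)/2)ι(q) − ((1−σ)/2)ι(q̄) = (σ/2)(ι(q)+ι(q̄)) + (1/2)(ι(q)−ι(q̄))`;
in particular `σ ḡ ĝ ∈ ℝ⁴ ⊂ ℍ^𝒜` and it corresponds to the quaternion `ḡ₁g₂` under
the identification `σq₀ + q₁I + q₂J + q₃K ↦ q₀ + q₁I + q₂J + q₃K`. -/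
theorem sigma_conj_hat_product (g₁ g₂ : Quaternion ℝ) :
    let g : HA := halfPlus * iotaH g₁ + halfMinus * iotaH g₂
    let q : Quaternion ℝ := star g₁ * g₂
    σQ * star g * hatQ g = halfPlus * iotaH q - halfMinus * iotaH (star q) ∧
    σQ * star g * hatQ g =
      (1/2 : ℝ) • (σQ * (iotaH q + iotaH (star q))) + (1/2 : ℝ) • (iotaH q - iotaH (star q)) ∧
    σQ * star g * hatQ g ∈ R4set ∧
    σQ * star g * hatQ g = embR4 q.re q.imI q.imJ q.imK := by
  intro g q
  have key : σQ * star g * hatQ g = embR4 q.re q.imI q.imJ q.imK := by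
    simp only [g, q, halfPlus_mkHA, halfMinus_mkHA, sigma_mkHA, iota_mkHA, embR4_mkHA,
      mkHA_mul, mkHA_add, mkHA_star, mkHA_hat, Quaternion.re_mul, Quaternion.imI_mul,
      Quaternion.imJ_mul, Quaternion.imK_mul, Quaternion.re_star, Quaternion.imI_star,
      Quaternion.imJ_star, Quaternion.imK_star]
    congr 1 <;> ring
  rw [key]
  refine ⟨?_, ?_, ?_, rfl⟩
  · simp only [halfPlus_mkHA, halfMinus_mkHA, iota_mkHA, embR4_mkHA, mkHA_mul, mkHA_sub,
      Quaternion.re_star, Quaternion.imI_star, Quaternion.imJ_star, Quaternion.imK_star]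
    congr 1 <;> ring
  · simp only [sigma_mkHA, iota_mkHA, embR4_mkHA, mkHA_mul, mkHA_add, mkHA_sub, mkHA_smul,
      Quaternion.re_star, Quaternion.imI_star, Quaternion.imJ_star, Quaternion.imK_star]
    congr 1 <;> ring
  · change hatQ (star (embR4 q.re q.imI q.imJ q.imK)) = -embR4 q.re q.imI q.imJ q.imK
    simp only [embR4_mkHA, mkHA_star, mkHA_hat, mkHA_neg, neg_neg]
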